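/- arXiv:math/0505034 — 3 statements merged into one kernel-verified Lean document; each statement's English description precedes it below -/
import Mathlib

section
/- Let Q be a set of questions, A a set of answers, 𝒫 a set of positions (functions from Q to A), and let i, j ∈ Q with i ≠ j be questions receiving the same answer in every element of 𝒫, i.e. ∀ P ∈ 𝒫, P(i) = P(j). Let 𝒫' be the set of restrictions of elements of 𝒫 to Q \ {j}. Then 𝒫 satisfies condition (G) if and only if 𝒫' satisfies condition (G) (with Q \ {j} as the set of questions); thus the pair of questions may be replaced by their conjunction without loss of generality with respect to globalism. -/
/-- If two distinct questions i and j receive the same answer in every element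
of Ps, and Ps' is the set of restrictions of elements of Ps to Q \ {j}, then
Ps satisfies (G) iff Ps' satisfies (G): the pair of questions may be replaced
by their conjunction without loss of generality w.r.t. globalism. -/
theorem stmt_14 (Q A : Type*) (Ps : Set (Q → A)) (i j : Q) (hij : i ≠ j)
    (h : ∀ P ∈ Ps, P i = P j) :
    ((∀ P ∈ Ps, ∀ y z : Q, P y = P z) ↔
      (∀ P' ∈ (fun (P : Q → A) (q : {q : Q // q ≠ j}) => P q.val) '' Ps,
        ∀ y z : {q : Q // q ≠ j}, P' y = P' z)) := by
  constructor
  · rintro hG _ ⟨P, hP, rfl⟩ y z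
    exact hG P hP y.val z.val
  · intro hG P hP
    have key : ∀ y : Q, P y = P i := by
      intro y
      by_cases hy : y = j
      · rw [hy, h P hP]
      · exact hG _ ⟨P, hP, rfl⟩ ⟨y, hy⟩ ⟨i, hij⟩
    intro y z
    rw [key y, key z]
end

section
/- Let Q be a set of questions with at least two elements and A a set of answers with at least two elements. Then there exists a set 𝒫 of positions (functions from Q to A) that simultaneously fails condition (G), fails condition (M), satisfies condition (G′), and satisfies condition (M′); that is, some situations exhibit both hybrid localism and hybrid pluralism. -/
/-- If Q and A each have at least two elements, then there is a set Ps of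
positions failing (G), failing (M), satisfying (G′) and satisfying (M′):
some situations exhibit both hybrid localism and hybrid pluralism. -/
theorem stmt_17 (Q A : Type*) [Nontrivial Q] [Nontrivial A] :
    ∃ Ps : Set (Q → A),
      ¬ (∀ P ∈ Ps, ∀ y z : Q, P y = P z) ∧
      ¬ (∀ y : Q, ∀ P ∈ Ps, ∀ P' ∈ Ps, P y = P' y) ∧
      (∃ P ∈ Ps, ∀ y z : Q, P y = P z) ∧
      (∃ y : Q, ∀ P ∈ Ps, ∀ P' ∈ Ps, P y = P' y) := by
  classical
  obtain ⟨p, q, hpq⟩ := exists_pair_ne Q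
  obtain ⟨a, b, hab⟩ := exists_pair_ne A
  have hf : Function.update (fun _ : Q => a) q b ∈ {P : Q → A | P p = a} := by
    simp [Function.update_of_ne hpq]
  have hc : (fun _ : Q => a) ∈ {P : Q → A | P p = a} := rfl
  refine ⟨{P | P p = a}, fun h => ?_, fun h => ?_, ⟨_, hc, fun _ _ => rfl⟩,
    ⟨p, fun P hP P' hP' => Eq.trans hP (Eq.symm hP')⟩⟩
  · have := h _ hf p q
    rw [Function.update_of_ne hpq, Function.update_self] at this
    exact hab this
  · have := h q _ hc _ hf
    rw [Function.update_self] at this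
    exact hab this
end

section
/- Let Q be a set of questions with at least two elements and A a set of answers with at least two elements. Then there exists a set 𝒫 of positions (functions from Q to A) that fails condition (G), fails condition (M), fails condition (G′), and fails condition (M′); that is, strict local pluralism is realizable. -/
/-- If Q and A each have at least two elements, then there is a set Ps of
positions failing (G), (M), (G′) and (M′): strict local pluralism is
realizable. -/
theorem stmt_18 (Q A : Type*) [Nontrivial Q] [Nontrivial A] :
    ∃ Ps : Set (Q → A),
      ¬ (∀ P ∈ Ps, ∀ y z : Q, P y = P z) ∧
      ¬ (∀ y : Q, ∀ P ∈ Ps, ∀ P' ∈ Ps, P y = P' y) ∧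
      ¬ (∃ P ∈ Ps, ∀ y z : Q, P y = P z) ∧
      ¬ (∃ y : Q, ∀ P ∈ Ps, ∀ P' ∈ Ps, P y = P' y) := by
  classical
  obtain ⟨q, r, hqr⟩ := exists_pair_ne Q
  obtain ⟨a, b, hab⟩ := exists_pair_ne A
  obtain ⟨f, g, hf, hg, hfg⟩ : ∃ f g : Q → A, f q ≠ f r ∧ g q ≠ g r ∧ ∀ y, f y ≠ g y := by
    refine ⟨fun x => if x = q then a else b, fun x => if x = q then b else a, ?_, ?_, ?_⟩
    · simpa [hqr.symm] using hab
    · simpa [hqr.symm] using hab.symm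
    · intro y
      by_cases h : y = q
      · simpa [h] using hab
      · simpa [h] using hab.symm
  have mf : f ∈ ({f, g} : Set (Q → A)) := Or.inl rfl
  have mg : g ∈ ({f, g} : Set (Q → A)) := Or.inr rfl
  refine ⟨{f, g}, fun h => hf (h f mf q r), fun h => hfg q (h q f mf g mg), ?_, ?_⟩
  · rintro ⟨P, rfl | rfl, h⟩
    · exact hf (h q r)
    · exact hg (h q r)
  · rintro ⟨y, h⟩
    exact hfg y (h f mf g mg)
end
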